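/- Let p ∈ ℕ and f ∈ Ω_w(A*, p) ∪ Ω(A*, p). Then there exists a constant C′ > 0 such that for any I, J ∈ A* there exists an integer N = N(I, J) with Σ_{i=0}^p Σ_{K ∈ A^{n+i}} f*(IKJ) ≥ C′ f*(I) f*(J) for all n ≥ N. Moreover, if f ∈ Ω(A*, p), then Σ_{K ∈ A^n} f*(IKJ) ≥ C′ f*(I) f*(J) for all n ≥ N. -/

import Mathlib

open MeasureTheory Filter Topology
open scoped Classical ENNReal NNReal

noncomputable section

/-- The left shift on one-sided sequences. -/
def shiftMap {A : Type} : (ℕ → A) → (ℕ → A) := fun x n => x (n + 1)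

/-- The cylinder set of a finite word. -/
def cyl {A : Type} (I : List A) : Set (ℕ → A) :=
  {x | ∀ i : Fin I.length, x i = I.get i}

/-- Membership of a word in the language of `X`. -/
def Lang {A : Type} (X : Set (ℕ → A)) (I : List A) : Prop :=
  (cyl I ∩ X).Nonempty

/-- `X` is a (nonempty) one-sided subshift. -/
def IsSubshift {A : Type} [TopologicalSpace A] (X : Set (ℕ → A)) : Prop :=
  X.Nonempty ∧ IsCompact X ∧ shiftMap '' X ⊆ X

/-- weak `p`-specification -/
def WeakSpecification {A : Type} (X : Set (ℕ → A)) (p : ℕ) : Prop :=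
  ∀ I J : List A, Lang X I → Lang X J →
    ∃ K : List A, K.length ≤ p ∧ Lang X (I ++ K ++ J)

/-- `p`-specification -/
def Specification {A : Type} (X : Set (ℕ → A)) (p : ℕ) : Prop :=
  ∀ I J : List A, Lang X I → Lang X J →
    ∃ K : List A, K.length = p ∧ Lang X (I ++ K ++ J)

/-- invariant probability measures supported on `X` (predicate on plain measures) -/
def InvOn {A : Type} [MeasurableSpace A] (X : Set (ℕ → A)) (μ : Measure (ℕ → A)) : Prop :=
  IsProbabilityMeasure μ ∧ μ.map shiftMap = μ ∧ μ X = 1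

/-- the set of shift-invariant probability measures on `X` -/
def MInv {A : Type} [MeasurableSpace A] (X : Set (ℕ → A)) :
    Set (ProbabilityMeasure (ℕ → A)) :=
  {μ | (μ : Measure (ℕ → A)).map shiftMap = (μ : Measure (ℕ → A)) ∧
    (μ : Measure (ℕ → A)) X = 1}

/-- measure of a word: `μ([I] ∩ X)` -/
def mw {A : Type} [MeasurableSpace A] (X : Set (ℕ → A)) (μ : Measure (ℕ → A))
    (I : List A) : ℝ :=
  (μ (cyl I ∩ X)).toReal

/-- the initial word of length `n` of a sequence -/
def wordOf {A : Type} (x : ℕ → A) (n : ℕ) : List A := List.ofFn (fun i : Fin n => x i)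

/-- `n`-block entropy -/
def Hblock {A : Type} [Fintype A] [MeasurableSpace A] (X : Set (ℕ → A))
    (μ : Measure (ℕ → A)) (n : ℕ) : ℝ :=
  -∑ w : Fin n → A, mw X μ (List.ofFn w) * Real.log (mw X μ (List.ofFn w))

/-- measure-theoretic entropy (the limit exists for invariant measures; `liminf` realizes it) -/
def ent {A : Type} [Fintype A] [MeasurableSpace A] (X : Set (ℕ → A))
    (μ : Measure (ℕ → A)) : ℝ :=
  liminf (fun n : ℕ => Hblock X μ n / n) atTop

/-- extended logarithm: `log t`, with value `⊥` for `t ≤ 0` -/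
def elog (t : ℝ) : EReal := if t ≤ 0 then ⊥ else ((Real.log t : ℝ) : EReal)

/-- the integral `∫ log g dμ`, valued in `ℝ ∪ {−∞}` -/
def intlog {Ω : Type*} [MeasurableSpace Ω] (μ : Measure Ω) (g : Ω → ℝ) : EReal :=
  ((∫⁻ x, ENNReal.ofReal (Real.log (g x)) ∂μ : ℝ≥0∞) : EReal) -
    ((∫⁻ x, (if g x ≤ 0 then (⊤ : ℝ≥0∞) else ENNReal.ofReal (-Real.log (g x))) ∂μ : ℝ≥0∞) : EReal)

/-- sub-additive potential `Φ = (log φ_n)_{n ≥ 1}` -/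
def SubaddPot {A : Type} [TopologicalSpace A] (X : Set (ℕ → A))
    (φ : ℕ → (ℕ → A) → ℝ) : Prop :=
  (∀ n, 1 ≤ n → ContinuousOn (φ n) X) ∧
  (∀ n, 1 ≤ n → ∀ x ∈ X, 0 ≤ φ n x) ∧
  ∃ c > (0:ℝ), ∀ n m : ℕ, 1 ≤ n → 1 ≤ m → ∀ x ∈ X,
    φ (n + m) x ≤ c * φ n x * φ m (shiftMap^[n] x)

/-- `Φ_*(μ) = lim (1/n) ∫ log φ_n dμ` (realized as a `liminf` in `EReal`) -/
def PhiStar {A : Type} [MeasurableSpace A] (μ : Measure (ℕ → A))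
    (φ : ℕ → (ℕ → A) → ℝ) : EReal :=
  liminf (fun n : ℕ => (((n : ℝ)⁻¹ : ℝ) : EReal) * intlog μ (φ n)) atTop

/-- sub-multiplicative function on the language of `X` -/
def Submult {A : Type} (X : Set (ℕ → A)) (φ : List A → ℝ) : Prop :=
  (∀ I, Lang X I → 0 ≤ φ I) ∧ φ [] = 1 ∧
  ∃ c > (0:ℝ), ∀ I J : List A, Lang X (I ++ J) → φ (I ++ J) ≤ c⁻¹ * φ I * φ J

/-- the potential generated by a word function -/
def genPot {A : Type} (φ : List A → ℝ) : ℕ → (ℕ → A) → ℝ := fun n x => φ (wordOf x n)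

/-- the scaled potential `cΦ = (log φ_n^c)` -/
def scPot {Ω : Type*} (c : ℝ) (φ : ℕ → Ω → ℝ) : ℕ → Ω → ℝ := fun n x => φ n x ^ c

/-- the "pressure value" `Φ_*(μ) + h_μ` -/
def eqVal {A : Type} [Fintype A] [MeasurableSpace A] (X : Set (ℕ → A))
    (φ : ℕ → (ℕ → A) → ℝ) (μ : ProbabilityMeasure (ℕ → A)) : EReal :=
  PhiStar (μ : Measure (ℕ → A)) φ + ((ent X (μ : Measure (ℕ → A)) : ℝ) : EReal)

/-- the set of equilibrium states of `Φ` -/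
def EqSet {A : Type} [Fintype A] [MeasurableSpace A] (X : Set (ℕ → A))
    (φ : ℕ → (ℕ → A) → ℝ) : Set (ProbabilityMeasure (ℕ → A)) :=
  {μ | μ ∈ MInv X ∧ eqVal X φ μ = ⨆ η ∈ MInv X, eqVal X φ η}

/-- sequence map induced by a one-block map -/
def blockMap {A B : Type} (π : A → B) : (ℕ → A) → (ℕ → B) := fun x n => π (x n)

/-- pushforward of a probability measure under a one-block map -/
def pushM {A B : Type} [MeasurableSpace A] [MeasurableSpace B] (π : A → B)
    (μ : ProbabilityMeasure (ℕ → A)) : Measure (ℕ → B) :=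
  (μ : Measure (ℕ → A)).map (blockMap π)

/-- conditional equilibrium states of `Φ` over `ν` -/
def CondEqSet {A B : Type} [Fintype A] [MeasurableSpace A] [MeasurableSpace B]
    (X : Set (ℕ → A)) (π : A → B) (φ : ℕ → (ℕ → A) → ℝ) (ν : Measure (ℕ → B)) :
    Set (ProbabilityMeasure (ℕ → A)) :=
  {μ | μ ∈ MInv X ∧ pushM π μ = ν ∧
    eqVal X φ μ = ⨆ η ∈ {η | η ∈ MInv X ∧ pushM π η = ν}, eqVal X φ η}

/-- the projected word function `ψ(J) = Σ_{I : πI = J} φ(I)` -/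
def psiProj {A B : Type} [Fintype A] (X : Set (ℕ → A)) (π : A → B) (φ : List A → ℝ)
    (J : List B) : ℝ :=
  ∑ w : Fin J.length → A,
    if Lang X (List.ofFn w) ∧ List.map π (List.ofFn w) = J then φ (List.ofFn w) else 0

/-- `φ^{(2)}(J) = (Σ_{I : πI = J} φ(I)^{1/a₁})^{a₁}` -/
def phiTwo {A B : Type} [Fintype A] (X : Set (ℕ → A)) (π : A → B) (φ : List A → ℝ)
    (a₁ : ℝ) (J : List B) : ℝ :=
  (∑ w : Fin J.length → A,
    if Lang X (List.ofFn w) ∧ List.map π (List.ofFn w) = J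
    then φ (List.ofFn w) ^ a₁⁻¹ else 0) ^ a₁

/-- `a`-weighted pressure value for `k = 2` -/
def wVal2 {A B : Type} [Fintype A] [Fintype B] [MeasurableSpace A] [MeasurableSpace B]
    (X : Set (ℕ → A)) (Y : Set (ℕ → B)) (π : A → B) (φ : ℕ → (ℕ → A) → ℝ)
    (a₁ a₂ : ℝ) (μ : ProbabilityMeasure (ℕ → A)) : EReal :=
  PhiStar (μ : Measure (ℕ → A)) φ +
    ((a₁ * ent X (μ : Measure (ℕ → A)) + a₂ * ent Y (pushM π μ) : ℝ) : EReal)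

/-- the set of `a`-weighted equilibrium states, `k = 2` -/
def WEqSet2 {A B : Type} [Fintype A] [Fintype B] [MeasurableSpace A] [MeasurableSpace B]
    (X : Set (ℕ → A)) (Y : Set (ℕ → B)) (π : A → B) (φ : ℕ → (ℕ → A) → ℝ)
    (a₁ a₂ : ℝ) : Set (ProbabilityMeasure (ℕ → A)) :=
  {μ | μ ∈ MInv X ∧ wVal2 X Y π φ a₁ a₂ μ = ⨆ η ∈ MInv X, wVal2 X Y π φ a₁ a₂ η}

/-- convexity of a set of probability measures -/
def ConvexPM {Ω : Type*} [MeasurableSpace Ω] (S : Set (ProbabilityMeasure Ω)) : Prop :=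
  ∀ μ₁ ∈ S, ∀ μ₂ ∈ S, ∀ t : ℝ, 0 ≤ t → t ≤ 1 → ∀ μ : ProbabilityMeasure Ω,
    (μ : Measure Ω) = ENNReal.ofReal t • (μ₁ : Measure Ω) +
      ENNReal.ofReal (1 - t) • (μ₂ : Measure Ω) → μ ∈ S

/-- extreme points of a set of probability measures -/
def IsExtremePM {Ω : Type*} [MeasurableSpace Ω] (S : Set (ProbabilityMeasure Ω))
    (μ : ProbabilityMeasure Ω) : Prop :=
  μ ∈ S ∧ ∀ μ₁ ∈ S, ∀ μ₂ ∈ S, ∀ t : ℝ, 0 < t → t < 1 →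
    (μ : Measure Ω) = ENNReal.ofReal t • (μ₁ : Measure Ω) +
      ENNReal.ofReal (1 - t) • (μ₂ : Measure Ω) → μ₁ = μ₂

/-- the class `Ω_w(A*, p)` -/
def OmegaW {A : Type} [Fintype A] (p : ℕ) (f : List A → ℝ) : Prop :=
  (∀ I, 0 ≤ f I ∧ f I ≤ 1) ∧
  ∃ c > (0:ℝ),
    (∀ n : ℕ, ∑ w : Fin n → A, f (List.ofFn w) = 1) ∧
    (∀ I J : List A, ∃ K : List A, K.length ≤ p ∧ c * (f I * f J) ≤ f (I ++ K ++ J)) ∧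
    (∀ I : List A, ∃ i j : A, c * f I ≤ f (i :: I) ∧ c * f I ≤ f (I ++ [j]))

/-- the class `Ω(A*, p)` -/
def OmegaS {A : Type} [Fintype A] (p : ℕ) (f : List A → ℝ) : Prop :=
  (∀ I, 0 ≤ f I ∧ f I ≤ 1) ∧
  ∃ c > (0:ℝ),
    (∀ n : ℕ, ∑ w : Fin n → A, f (List.ofFn w) = 1) ∧
    (∀ I J : List A, ∃ K : List A, K.length = p ∧ c * (f I * f J) ≤ f (I ++ K ++ J))

/-- `f_{m,n}(I)` -/
def fmn {A : Type} [Fintype A] (f : List A → ℝ) (m n : ℕ) (I : List A) : ℝ :=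
  ∑ u : Fin m → A, ∑ v : Fin n → A, f (List.ofFn u ++ I ++ List.ofFn v)

/-- `f*(I) = sup_{m,n} f_{m,n}(I)` -/
def fstar {A : Type} [Fintype A] (f : List A → ℝ) (I : List A) : ℝ :=
  ⨆ m : ℕ, ⨆ n : ℕ, fmn f m n I

/-- the class `D_w(X, p)` -/
def Dw {A : Type} (X : Set (ℕ → A)) (p : ℕ) (φ : List A → ℝ) : Prop :=
  (∀ I, Lang X I → 0 ≤ φ I) ∧ (∃ I, Lang X I ∧ I ≠ [] ∧ 0 < φ I) ∧
  ∃ c : ℝ, 0 < c ∧ c ≤ 1 ∧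
    (∀ I J : List A, Lang X (I ++ J) → φ (I ++ J) ≤ c⁻¹ * φ I * φ J) ∧
    (∀ I J : List A, Lang X I → Lang X J →
      ∃ K : List A, K.length ≤ p ∧ Lang X (I ++ K ++ J) ∧
        c * (φ I * φ J) ≤ φ (I ++ K ++ J))

/-- the class `D(X, p)` -/
def Ds {A : Type} (X : Set (ℕ → A)) (p : ℕ) (φ : List A → ℝ) : Prop :=
  (∀ I, Lang X I → 0 ≤ φ I) ∧ (∃ I, Lang X I ∧ I ≠ [] ∧ 0 < φ I) ∧
  ∃ c : ℝ, 0 < c ∧ c ≤ 1 ∧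
    (∀ I J : List A, Lang X (I ++ J) → φ (I ++ J) ≤ c⁻¹ * φ I * φ J) ∧
    (∀ I J : List A, Lang X I → Lang X J →
      ∃ K : List A, K.length = p ∧ Lang X (I ++ K ++ J) ∧
        c * (φ I * φ J) ≤ φ (I ++ K ++ J))

end

noncomputable section

/-- iterated one-block maps along a chain of alphabets: `tauFrom π j i : B j → B (j+i)` -/
def tauFrom {B : ℕ → Type} (π : ∀ i, B i → B (i+1)) (j : ℕ) : (i : ℕ) → B j → B (j + i)
  | 0 => id
  | (i+1) => fun a => π (j + i) (tauFrom π j i a)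

/-- weighted pressure value along a chain starting at index `j`, with `k` weights `w 0, …, w (k-1)` -/
def wValGen {B : ℕ → Type} [∀ i, Fintype (B i)] [∀ i, MeasurableSpace (B i)]
    (π : ∀ i, B i → B (i+1)) (X : ∀ i, Set (ℕ → B i)) (j k : ℕ) (w : ℕ → ℝ)
    (φ : ℕ → (ℕ → B j) → ℝ) (μ : ProbabilityMeasure (ℕ → B j)) : EReal :=
  PhiStar (μ : Measure (ℕ → B j)) φ +
    ((∑ i ∈ Finset.range k, w i *
      ent (X (j + i)) ((μ : Measure (ℕ → B j)).map (blockMap (tauFrom π j i))) : ℝ) : EReal)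

/-- weighted equilibrium states along a chain -/
def wEqSetGen {B : ℕ → Type} [∀ i, Fintype (B i)] [∀ i, MeasurableSpace (B i)]
    (π : ∀ i, B i → B (i+1)) (X : ∀ i, Set (ℕ → B i)) (j k : ℕ) (w : ℕ → ℝ)
    (φ : ℕ → (ℕ → B j) → ℝ) : Set (ProbabilityMeasure (ℕ → B j)) :=
  {μ | μ ∈ MInv (X j) ∧
    wValGen π X j k w φ μ = ⨆ η ∈ MInv (X j), wValGen π X j k w φ η}

end

section helpers

/-- sum over words of length `n` -/
noncomputable def SW {A : Type} [Fintype A] (n : ℕ) (g : List A → ℝ) : ℝ :=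
  ∑ w : Fin n → A, g (List.ofFn w)

lemma SW_add {A : Type} [Fintype A] (m n : ℕ) (g : List A → ℝ) :
    SW (m + n) g = SW m (fun u => SW n (fun v => g (u ++ v))) := by
  unfold SW
  rw [← Fintype.sum_prod_type' (f := fun (u : Fin m → A) (v : Fin n → A) =>
    g (List.ofFn u ++ List.ofFn v))]
  symm
  apply Fintype.sum_equiv (Fin.appendEquiv m n)
  intro x
  simp [Fin.appendEquiv, List.ofFn_fin_append]

lemma SW_comm {A : Type} [Fintype A] (m n : ℕ) (g : List A → List A → ℝ) :
    SW m (fun u => SW n (fun v => g u v)) = SW n (fun v => SW m (fun u => g u v)) := by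
  unfold SW
  exact Finset.sum_comm

lemma SW_mono {A : Type} [Fintype A] (n : ℕ) {g h : List A → ℝ} (H : ∀ I, g I ≤ h I) :
    SW n g ≤ SW n h := Finset.sum_le_sum fun _ _ => H _

lemma SW_nonneg {A : Type} [Fintype A] (n : ℕ) {g : List A → ℝ} (H : ∀ I, 0 ≤ g I) :
    0 ≤ SW n g := Finset.sum_nonneg fun _ _ => H _

lemma SW_mul {A : Type} [Fintype A] (n : ℕ) (c : ℝ) (g : List A → ℝ) :
    SW n (fun I => c * g I) = c * SW n g := by
  unfold SW; rw [Finset.mul_sum]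

lemma SW_sum {A : Type} [Fintype A] (n : ℕ) (P : Finset ℕ) (g : ℕ → List A → ℝ) :
    SW n (fun I => ∑ i ∈ P, g i I) = ∑ i ∈ P, SW n (g i) := by
  unfold SW; rw [Finset.sum_comm]

lemma le_SW {A : Type} [Fintype A] (K : List A) {g : List A → ℝ} (H : ∀ I, 0 ≤ g I) :
    g K ≤ SW K.length g := by
  unfold SW
  have := Finset.single_le_sum (f := fun w : Fin K.length → A => g (List.ofFn w))
    (fun _ _ => H _) (Finset.mem_univ K.get)
  simpa using this

lemma fmn_eq {A : Type} [Fintype A] (f : List A → ℝ) (m n : ℕ) (I : List A) :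
    fmn f m n I = SW m (fun u => SW n (fun v => f (u ++ I ++ v))) := rfl

lemma fmn_nonneg {A : Type} [Fintype A] {f : List A → ℝ} (h0 : ∀ I, 0 ≤ f I) (m n : ℕ)
    (I : List A) : 0 ≤ fmn f m n I := by
  rw [fmn_eq]
  exact SW_nonneg _ fun _ => SW_nonneg _ fun _ => h0 _

lemma fmn_le_one {A : Type} [Fintype A] {f : List A → ℝ} (h0 : ∀ I, 0 ≤ f I)
    (h1 : ∀ n, SW n f = 1) (m n : ℕ) (I : List A) : fmn f m n I ≤ 1 := by
  rw [← h1 (m + (I.length + n)), SW_add, fmn_eq]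
  refine SW_mono _ fun u => ?_
  rw [SW_add]
  have := le_SW I (g := fun w => SW n (fun v => f (u ++ (w ++ v))))
    (fun _ => SW_nonneg _ fun _ => h0 _)
  simpa using this

lemma bdd_in {A : Type} [Fintype A] {f : List A → ℝ} (h0 : ∀ I, 0 ≤ f I)
    (h1 : ∀ n, SW n f = 1) (m : ℕ) (I : List A) :
    BddAbove (Set.range fun n => fmn f m n I) :=
  ⟨1, by rintro _ ⟨n, rfl⟩; exact fmn_le_one h0 h1 m n I⟩

lemma bdd_out {A : Type} [Fintype A] {f : List A → ℝ} (h0 : ∀ I, 0 ≤ f I)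
    (h1 : ∀ n, SW n f = 1) (I : List A) :
    BddAbove (Set.range fun m => ⨆ n, fmn f m n I) :=
  ⟨1, by rintro _ ⟨m, rfl⟩; exact ciSup_le fun n => fmn_le_one h0 h1 m n I⟩

lemma fmn_le_fstar {A : Type} [Fintype A] {f : List A → ℝ} (h0 : ∀ I, 0 ≤ f I)
    (h1 : ∀ n, SW n f = 1) (m n : ℕ) (I : List A) : fmn f m n I ≤ fstar f I :=
  (le_ciSup (bdd_in h0 h1 m I) n).trans (le_ciSup (bdd_out h0 h1 I) m)

lemma fstar_nonneg {A : Type} [Fintype A] {f : List A → ℝ} (h0 : ∀ I, 0 ≤ f I)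
    (h1 : ∀ n, SW n f = 1) (I : List A) : 0 ≤ fstar f I :=
  (fmn_nonneg h0 0 0 I).trans (fmn_le_fstar h0 h1 0 0 I)

lemma exists_half {A : Type} [Fintype A] {f : List A → ℝ} (h0 : ∀ I, 0 ≤ f I)
    (h1 : ∀ n, SW n f = 1) (I : List A) : ∃ m n, fstar f I / 2 ≤ fmn f m n I := by
  rcases (fstar_nonneg h0 h1 I).eq_or_lt with h | h
  · exact ⟨0, 0, by rw [← h]; simpa using fmn_nonneg h0 0 0 I⟩
  · have h2 : fstar f I / 2 < ⨆ m, ⨆ n, fmn f m n I := by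
      change fstar f I / 2 < fstar f I
      linarith
    obtain ⟨m, hm⟩ := exists_lt_of_lt_ciSup h2
    obtain ⟨n, hn⟩ := exists_lt_of_lt_ciSup hm
    exact ⟨m, n, hn.le⟩

lemma uniform_lower {A : Type} [Fintype A] {f : List A → ℝ} (h0 : ∀ I, 0 ≤ f I)
    (h1 : ∀ n, SW n f = 1) (p : ℕ) {D : ℝ} (hD : 0 < D)
    (hR : ∀ I, ∀ k, p ≤ k → D * f I ≤ SW k (fun v => f (I ++ v)))
    (hL : ∀ I, ∀ k, p ≤ k → D * f I ≤ SW k (fun v => f (v ++ I))) (I : List A) :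
    ∃ M, ∀ m n, M ≤ m → M ≤ n → D * D / 2 * fstar f I ≤ fmn f m n I := by
  obtain ⟨m₀, n₀, h⟩ := exists_half h0 h1 I
  refine ⟨m₀ + n₀ + p, fun m n hm hn => ?_⟩
  obtain ⟨k, rfl⟩ : ∃ k, m = k + m₀ := ⟨m - m₀, by omega⟩
  obtain ⟨l, rfl⟩ : ∃ l, n = n₀ + l := ⟨n - n₀, by omega⟩
  have a1 : D * fmn f m₀ n₀ I ≤ fmn f m₀ (n₀ + l) I := by
    rw [fmn_eq, fmn_eq, ← SW_mul]
    refine SW_mono _ fun u => ?_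
    rw [← SW_mul, SW_add]
    refine SW_mono _ fun v => ?_
    simpa [List.append_assoc] using hR (u ++ I ++ v) l (by omega)
  have a2 : D * fmn f m₀ (n₀ + l) I ≤ fmn f (k + m₀) (n₀ + l) I := by
    rw [fmn_eq, fmn_eq, ← SW_mul, SW_add, SW_comm]
    refine SW_mono _ fun u => ?_
    rw [← SW_mul, SW_comm]
    refine SW_mono _ fun v => ?_
    simpa [List.append_assoc] using hL (u ++ I ++ v) k (by omega)
  have a3 := mul_le_mul_of_nonneg_left a1 hD.le
  have a4 := mul_le_mul_of_nonneg_left h (mul_nonneg hD.le hD.le)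
  nlinarith

lemma main_lower {A : Type} [Fintype A] {f : List A → ℝ} (h0 : ∀ I, 0 ≤ f I)
    (h1 : ∀ n, SW n f = 1) (p : ℕ) {D c : ℝ} (hD : 0 < D) (hc : 0 < c)
    (hR : ∀ I, ∀ k, p ≤ k → D * f I ≤ SW k (fun v => f (I ++ v)))
    (hL : ∀ I, ∀ k, p ≤ k → D * f I ≤ SW k (fun v => f (v ++ I)))
    (P : Finset ℕ)
    (hB : ∀ I J, c * (f I * f J) ≤ ∑ i ∈ P, SW i (fun K => f (I ++ K ++ J))) :
    ∀ I J : List A, ∃ N : ℕ, ∀ n, N ≤ n →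
      c * (D * D / 2) * (D * D / 2) * (fstar f I * fstar f J) ≤
        ∑ i ∈ P, SW (n + i) (fun K => fstar f (I ++ K ++ J)) := by
  intro I J
  obtain ⟨a, ha⟩ := uniform_lower h0 h1 p hD hR hL I
  obtain ⟨b₀, hb⟩ := uniform_lower h0 h1 p hD hR hL J
  refine ⟨a + b₀, fun n hn => ?_⟩
  obtain ⟨b, rfl⟩ : ∃ b, n = a + b := ⟨n - a, by omega⟩
  have e1 := ha a a le_rfl le_rfl
  have e2 := hb b b₀ (by omega) le_rfl
  have n1 := fstar_nonneg h0 h1 I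
  have n2 := fstar_nonneg h0 h1 J
  have hDD : 0 < D * D / 2 := by positivity
  have e3 : (D * D / 2 * fstar f I) * (D * D / 2 * fstar f J) ≤ fmn f a a I * fmn f b b₀ J :=
    mul_le_mul e1 e2 (mul_nonneg hDD.le n2) (fmn_nonneg h0 _ _ _)
  have e4 : c * (fmn f a a I * fmn f b b₀ J) ≤
      ∑ i ∈ P, SW (a + b + i) (fun K => fmn f a b₀ (I ++ K ++ J)) := by
    have l1 : c * (fmn f a a I * fmn f b b₀ J) =
        SW a (fun u => SW a (fun s => SW b (fun t => SW b₀ (fun v =>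
          c * (f (u ++ I ++ s) * f (t ++ J ++ v)))))) := by
      simp only [SW_mul, fmn_eq]
      have : ∀ x : ℝ, ∀ g : List A → ℝ, ∀ n, SW n (fun I => g I * x) = SW n g * x := by
        intro x g n
        unfold SW; rw [Finset.sum_mul]
      simp only [this]
    have l2 : ∀ i, SW (a + b + i) (fun K => fmn f a b₀ (I ++ K ++ J)) =
        SW a (fun u => SW a (fun s => SW b (fun t => SW b₀ (fun v =>
          SW i (fun K => f (u ++ I ++ s ++ K ++ (t ++ J ++ v))))))) := by
      intro i
      rw [show a + b + i = a + (i + b) by omega]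
      simp only [fmn_eq]
      rw [SW_comm]
      congr 1; funext u
      rw [SW_add]
      congr 1; funext s
      rw [SW_add, SW_comm]
      congr 1; funext t
      rw [SW_comm]
      simp only [List.append_assoc]
    rw [l1]
    simp only [l2]
    simp only [← SW_sum]
    refine SW_mono _ fun u => SW_mono _ fun s => SW_mono _ fun t => SW_mono _ fun v => ?_
    exact hB _ _
  have e5 : ∑ i ∈ P, SW (a + b + i) (fun K => fmn f a b₀ (I ++ K ++ J)) ≤
      ∑ i ∈ P, SW (a + b + i) (fun K => fstar f (I ++ K ++ J)) :=
    Finset.sum_le_sum fun i _ => SW_mono _ fun K => fmn_le_fstar h0 h1 _ _ _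
  have e6 := mul_le_mul_of_nonneg_left e3 hc.le
  calc _ = c * ((D * D / 2 * fstar f I) * (D * D / 2 * fstar f J)) := by ring
    _ ≤ _ := e6.trans (e4.trans e5)

lemma step_aux {p : ℕ} {c d x : ℝ} (hd : 0 < d) (hd1 : d ≤ 1) {G : ℕ → ℝ}
    (hG0 : ∀ n, 0 ≤ G n) (hG : ∀ n, d * G n ≤ G (n + 1)) {n : ℕ}
    (h : c * x ≤ ∑ i ∈ Finset.range (p + 1), G (i + n)) :
    d ^ p * c / (p + 1) * x ≤ G (p + n) := by
  have hk : ∀ k n, d ^ k * G n ≤ G (n + k) := by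
    intro k
    induction k with
    | zero => intro n; simp
    | succ k ih =>
      intro n
      have := mul_le_mul_of_nonneg_left (ih n) hd.le
      have h2 := hG (n + k)
      calc _ = d * (d ^ k * G n) := by ring
        _ ≤ _ := this.trans h2
  have h3 : d ^ p * ∑ i ∈ Finset.range (p + 1), G (i + n) ≤ (p + 1) * G (p + n) := by
    rw [Finset.mul_sum]
    calc _ ≤ ∑ i ∈ Finset.range (p + 1), G (p + n) := by
          refine Finset.sum_le_sum fun i hi => ?_
          have hi' : i ≤ p := by simp at hi; omega
          have := hk (p - i) (i + n)
          rw [show i + n + (p - i) = p + n by omega] at this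
          refine le_trans (mul_le_mul_of_nonneg_right ?_ (hG0 _)) this
          exact pow_le_pow_of_le_one hd.le hd1 (by omega)
      _ = _ := by simp
  have h4 := mul_le_mul_of_nonneg_left h (pow_nonneg hd.le p)
  have hp : (0:ℝ) < p + 1 := by positivity
  rw [div_mul_eq_mul_div, div_le_iff₀ hp]
  nlinarith

lemma main_W {A : Type} [Fintype A] (p : ℕ) (f : List A → ℝ) (hf : OmegaW p f) :
    ∃ C > (0:ℝ), ∀ I J : List A, ∃ N : ℕ, ∀ n, N ≤ n →
      C * (fstar f I * fstar f J) ≤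
        ∑ i ∈ Finset.range (p + 1), SW (n + i) (fun K => fstar f (I ++ K ++ J)) := by
  obtain ⟨h01, c, hc, h1, h2, h3⟩ := hf
  have h0 : ∀ I, 0 ≤ f I := fun I => (h01 I).1
  have h1' : ∀ n, SW n f = 1 := h1
  have hB : ∀ I J, c * (f I * f J) ≤
      ∑ i ∈ Finset.range (p + 1), SW i (fun K => f (I ++ K ++ J)) := by
    intro I J
    obtain ⟨K, hK, h⟩ := h2 I J
    refine h.trans ((le_SW K (g := fun K => f (I ++ K ++ J)) fun _ => h0 _).trans ?_)
    exact Finset.single_le_sum (f := fun i => SW i (fun K => f (I ++ K ++ J)))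
      (fun i _ => SW_nonneg _ fun _ => h0 _) (Finset.mem_range.2 (by omega))
  set d := min c 1 with hd
  have hd0 : 0 < d := lt_min hc one_pos
  have hd1 : d ≤ 1 := min_le_right _ _
  have hdc : d ≤ c := min_le_left _ _
  have hD : 0 < d ^ p * c / (p + 1) := by positivity
  refine ⟨_, ?_, main_lower h0 h1' p hD hc ?_ ?_ _ hB⟩
  · positivity
  · intro I k hk
    obtain ⟨n, rfl⟩ : ∃ n, k = p + n := ⟨k - p, by omega⟩
    refine step_aux (G := fun k => SW k (fun v => f (I ++ v))) hd0 hd1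
      (fun _ => SW_nonneg _ fun _ => h0 _) ?_ ?_
    · intro n
      change d * SW n (fun v => f (I ++ v)) ≤ SW (n + 1) (fun v => f (I ++ v))
      rw [← SW_mul, SW_add]
      refine SW_mono _ fun v => ?_
      obtain ⟨i, j, -, hj⟩ := h3 (I ++ v)
      have := le_SW [j] (g := fun w => f (I ++ (v ++ w))) fun _ => h0 _
      refine (mul_le_mul_of_nonneg_right hdc (h0 _)).trans (hj.trans ?_)
      simpa using this
    · simp only [SW_add]
      calc c * f I = SW n (fun J => c * (f I * f J)) := by rw [SW_mul, SW_mul, h1']; ring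
        _ ≤ _ := SW_mono _ (fun J => hB I J)
        _ = _ := by
          rw [SW_sum]
          refine Finset.sum_congr rfl fun i _ => ?_
          rw [SW_comm]; simp
  · intro I k hk
    obtain ⟨n, rfl⟩ : ∃ n, k = p + n := ⟨k - p, by omega⟩
    refine step_aux (G := fun k => SW k (fun v => f (v ++ I))) hd0 hd1
      (fun _ => SW_nonneg _ fun _ => h0 _) ?_ ?_
    · intro n
      change d * SW n (fun v => f (v ++ I)) ≤ SW (n + 1) (fun v => f (v ++ I))
      rw [← SW_mul, add_comm n 1, SW_add, SW_comm]
      refine SW_mono _ fun v => ?_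
      obtain ⟨i, j, hi, -⟩ := h3 (v ++ I)
      have := le_SW [i] (g := fun w => f (w ++ v ++ I)) fun _ => h0 _
      refine (mul_le_mul_of_nonneg_right hdc (h0 _)).trans (hi.trans ?_)
      simpa using this
    · calc c * f I = SW n (fun J => c * f I * f J) := by rw [SW_mul, h1']; ring
        _ ≤ _ := SW_mono _ (fun J => by
          have := hB J I
          calc c * f I * f J = c * (f J * f I) := by ring
            _ ≤ _ := this)
        _ = _ := by
          rw [SW_sum]
          refine Finset.sum_congr rfl fun i _ => ?_
          rw [add_comm i n, SW_add]

lemma main_S {A : Type} [Fintype A] (p : ℕ) (f : List A → ℝ) (hf : OmegaS p f) :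
    ∃ C > (0:ℝ), ∀ I J : List A, ∃ N : ℕ, ∀ n, N ≤ n →
      C * (fstar f I * fstar f J) ≤ SW n (fun K => fstar f (I ++ K ++ J)) := by
  obtain ⟨h01, c, hc, h1, h2⟩ := hf
  have h0 : ∀ I, 0 ≤ f I := fun I => (h01 I).1
  have h1' : ∀ n, SW n f = 1 := h1
  have hB : ∀ I J, c * (f I * f J) ≤ SW p (fun K => f (I ++ K ++ J)) := by
    intro I J
    obtain ⟨K, hK, h⟩ := h2 I J
    have := h.trans (le_SW K (g := fun K => f (I ++ K ++ J)) fun _ => h0 _)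
    rwa [hK] at this
  have key := main_lower h0 h1' p hc hc ?_ ?_ {p} (by simpa using hB)
  · refine ⟨c * (c * c / 2) * (c * c / 2), ?_, fun I J => ?_⟩
    rotate_left
    · obtain ⟨N, hN⟩ := key I J
      refine ⟨N + p, fun n hn => ?_⟩
      have := hN (n - p) (by omega)
      rw [Finset.sum_singleton, show n - p + p = n by omega] at this
      exact this
    · positivity
  · intro I k hk
    obtain ⟨n, rfl⟩ : ∃ n, k = p + n := ⟨k - p, by omega⟩
    calc c * f I = SW n (fun J => c * (f I * f J)) := by rw [SW_mul, SW_mul, h1']; ring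
      _ ≤ _ := SW_mono _ (fun J => hB I J)
      _ = _ := by rw [SW_comm, SW_add]; simp
  · intro I k hk
    obtain ⟨n, rfl⟩ : ∃ n, k = n + p := ⟨k - p, by omega⟩
    calc c * f I = SW n (fun J => c * f I * f J) := by rw [SW_mul, h1']; ring
      _ ≤ _ := SW_mono _ (fun J => by
        have := hB J I
        calc c * f I * f J = c * (f J * f I) := by ring
          _ ≤ _ := this)
      _ = _ := by rw [SW_add]

end helpers

/-- Lemma 4.4 / `lem-t2`: for `f ∈ Ω_w(A*,p) ∪ Ω(A*,p)` there is `C' > 0` so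
that for all words `I, J` there is `N(I,J)` with
`Σ_{i=0}^p Σ_{K ∈ A^{n+i}} f*(IKJ) ≥ C' f*(I) f*(J)` for all `n ≥ N`; if moreover
`f ∈ Ω(A*,p)` then `Σ_{K ∈ A^n} f*(IKJ) ≥ C' f*(I) f*(J)` for all `n ≥ N`. -/
theorem weighted_eq_states_stmt_11 {A : Type} [Fintype A]
    (p : ℕ) (f : List A → ℝ) (hf : OmegaW p f ∨ OmegaS p f) :
    ∃ C' > (0:ℝ),
      (∀ I J : List A, ∃ N : ℕ, ∀ n : ℕ, N ≤ n →
        C' * (fstar f I * fstar f J) ≤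
          ∑ i ∈ Finset.range (p+1), ∑ K : Fin (n+i) → A,
            fstar f (I ++ List.ofFn K ++ J)) ∧
      (OmegaS p f → ∀ I J : List A, ∃ N : ℕ, ∀ n : ℕ, N ≤ n →
        C' * (fstar f I * fstar f J) ≤
          ∑ K : Fin n → A, fstar f (I ++ List.ofFn K ++ J)) := by
  by_cases hS : OmegaS p f
  · obtain ⟨C, hC, h⟩ := main_S p f hS
    refine ⟨C, hC, fun I J => ?_, fun _ => h⟩
    obtain ⟨N, hN⟩ := h I J
    refine ⟨N, fun n hn => (hN n hn).trans ?_⟩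
    obtain ⟨h01, c, hc, h1, h2⟩ := hS
    have h0 : ∀ I, 0 ≤ f I := fun I => (h01 I).1
    exact Finset.single_le_sum
      (f := fun i => SW (n + i) (fun K => fstar f (I ++ K ++ J)))
      (fun i _ => SW_nonneg _ fun _ => fstar_nonneg h0 h1 _)
      (Finset.mem_range.2 (Nat.succ_pos p))
  · obtain ⟨C, hC, h⟩ := main_W p f (hf.resolve_right hS)
    exact ⟨C, hC, h, fun h' => absurd h' hS⟩
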